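/- Let x_1 < x_2 < x_3 be real numbers and let θ̂ = μ̂ + iσ̂ ∈ ℍ maximize the Cauchy likelihood of (x_1, x_2, x_3) over ℍ. Then F(x_3; θ̂) + F(x_1; θ̂) = 2·F(x_2; θ̂), where F(x; μ + iσ) = 1/2 + (1/π)·arctan((x − μ)/σ) is the cumulative distribution function of the Cauchy distribution with location μ and scale σ. -/

import Mathlib

open Complex Finset

/-- The Cauchy likelihood of the sample `x` at parameter `θ = μ + iσ`. -/
noncomputable def cauchyL {n : ℕ} (x : Fin n → ℝ) (θ : ℂ) : ℝ :=
  ∏ j, (θ.im / Real.pi) / ((x j - θ.re) ^ 2 + θ.im ^ 2)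

/-- Cumulative distribution function of the Cauchy distribution with parameter `θ = μ + iσ`. -/
noncomputable def cauchyCDF (xv : ℝ) (θ : ℂ) : ℝ :=
  1 / 2 + (1 / Real.pi) * Real.arctan ((xv - θ.re) / θ.im)

/-!
Put `αⱼ = 2 arctan ((xⱼ - μ) / σ)`. The partial derivatives of the log-density of `xⱼ` in `μ` and
`σ` are `sin αⱼ / σ` and `-cos αⱼ / σ`, so the likelihood equations say that the unit vectors with
arguments `αⱼ` sum to zero. Three unit vectors summing to zero point to the vertices of an
equilateral triangle, so consecutive `αⱼ` differ by `2π/3`, and consecutive values of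
`F = 1/2 + α / (2π)` differ by `1/3`.
-/

theorem cos_two_mul_arctan (t : ℝ) :
    Real.cos (2 * Real.arctan t) = (1 - t ^ 2) / (1 + t ^ 2) := by
  rw [Real.cos_two_mul, Real.cos_sq_arctan]
  field

theorem sin_two_mul_arctan (t : ℝ) : Real.sin (2 * Real.arctan t) = 2 * t / (1 + t ^ 2) := by
  have sin_arctan_eq : Real.sin (Real.arctan t) = t * Real.cos (Real.arctan t) := by
    rw [← Real.tan_mul_cos (Real.cos_arctan_pos t).ne', Real.tan_arctan]
  calc Real.sin (2 * Real.arctan t)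
      = 2 * t * Real.cos (Real.arctan t) ^ 2 := by rw [Real.sin_two_mul, sin_arctan_eq]; ring
    _ = 2 * t / (1 + t ^ 2) := by rw [Real.cos_sq_arctan, mul_one_div]

section UnitVectors

variable {α β γ : ℝ}

theorem cos_sub_eq_neg_half_of_sum_eq_zero
    (hcos : Real.cos α + Real.cos β + Real.cos γ = 0)
    (hsin : Real.sin α + Real.sin β + Real.sin γ = 0) : Real.cos (β - α) = -1 / 2 := by
  have hγ := Real.sin_sq_add_cos_sq γ
  rw [show Real.cos γ = -(Real.cos α + Real.cos β) by linarith,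
    show Real.sin γ = -(Real.sin α + Real.sin β) by linarith] at hγ
  rw [Real.cos_sub]
  linarith [Real.sin_sq_add_cos_sq α, Real.sin_sq_add_cos_sq β]

theorem eq_two_pi_div_three_or_of_cos_eq_neg_half {t : ℝ} (h0 : 0 ≤ t) (hle : t ≤ 2 * Real.pi)
    (ht : Real.cos t = -1 / 2) : t = 2 * Real.pi / 3 ∨ t = 4 * Real.pi / 3 := by
  have hπ := Real.pi_pos
  have hcos : Real.cos (2 * Real.pi / 3) = -1 / 2 := by
    rw [show 2 * Real.pi / 3 = Real.pi - Real.pi / 3 by ring, Real.cos_pi_sub,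
      Real.cos_pi_div_three]
    norm_num
  have hmem : 2 * Real.pi / 3 ∈ Set.Icc 0 Real.pi := ⟨by positivity, by linarith⟩
  rcases le_total t Real.pi with htπ | hπt
  · exact .inl (Real.injOn_cos ⟨h0, htπ⟩ hmem (ht.trans hcos.symm))
  · have hreflect : 2 * Real.pi - t = 2 * Real.pi / 3 :=
      Real.injOn_cos ⟨by linarith, by linarith⟩ hmem
        ((Real.cos_two_pi_sub t).trans (ht.trans hcos.symm))
    exact .inr (by linarith)

theorem sub_eq_two_pi_div_three_of_sum_eq_zero
    (hαβ : α ≤ β) (hβγ : β ≤ γ) (hγα : γ < α + 2 * Real.pi)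
    (hcos : Real.cos α + Real.cos β + Real.cos γ = 0)
    (hsin : Real.sin α + Real.sin β + Real.sin γ = 0) :
    β - α = 2 * Real.pi / 3 ∧ γ - β = 2 * Real.pi / 3 := by
  have hβ : Real.cos (β - α) = -1 / 2 := cos_sub_eq_neg_half_of_sum_eq_zero hcos hsin
  have hγ : Real.cos (γ - β) = -1 / 2 :=
    cos_sub_eq_neg_half_of_sum_eq_zero (γ := α) (by linarith) (by linarith)
  -- The two gaps add up to less than `2π`, which excludes `4π/3` for either of them.
  rcases eq_two_pi_div_three_or_of_cos_eq_neg_half (by linarith) (by linarith) hβ with h | h <;>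
    rcases eq_two_pi_div_three_or_of_cos_eq_neg_half (by linarith) (by linarith) hγ with h' | h' <;>
    constructor <;> linarith [Real.pi_pos]

end UnitVectors

section Score

/-- Density at `x` of the Cauchy distribution with location `μ` and scale `σ`. Unlike in
`ProbabilityTheory.cauchyPDFReal`, the scale is a real number, so that one can differentiate
in it. -/
noncomputable def cauchyDensity (x μ σ : ℝ) : ℝ :=
  (σ / Real.pi) / ((x - μ) ^ 2 + σ ^ 2)

variable (x μ : ℝ) {σ : ℝ}

theorem cauchyDensity_ne_zero (hσ : σ ≠ 0) : cauchyDensity x μ σ ≠ 0 := by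
  unfold cauchyDensity
  positivity

theorem differentiableAt_cauchyDensity_location (hσ : σ ≠ 0) :
    DifferentiableAt ℝ (fun m ↦ cauchyDensity x m σ) μ := by
  have : (x - μ) ^ 2 + σ ^ 2 ≠ 0 := by positivity
  unfold cauchyDensity
  fun_prop (disch := assumption)

theorem differentiableAt_cauchyDensity_scale (hσ : σ ≠ 0) :
    DifferentiableAt ℝ (fun s ↦ cauchyDensity x μ s) σ := by
  have : (x - μ) ^ 2 + σ ^ 2 ≠ 0 := by positivity
  unfold cauchyDensity
  fun_prop (disch := assumption)

theorem logDeriv_cauchyDensity_location (hσ : σ ≠ 0) :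
    logDeriv (fun m ↦ cauchyDensity x m σ) μ =
      Real.sin (2 * Real.arctan ((x - μ) / σ)) / σ := by
  have hquad : HasDerivAt (fun m ↦ (x - m) ^ 2 + σ ^ 2) (-(2 * (x - μ))) μ := by
    simpa using (((hasDerivAt_id μ).const_sub x).pow 2).add_const (σ ^ 2)
  have hquad_ne : (x - μ) ^ 2 + σ ^ 2 ≠ 0 := by positivity
  unfold cauchyDensity
  rw [logDeriv_div μ (by positivity) hquad_ne (by fun_prop) hquad.differentiableAt,
    logDeriv_const, logDeriv_apply, hquad.deriv, sin_two_mul_arctan, Pi.zero_apply]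
  field

theorem logDeriv_cauchyDensity_scale (hσ : σ ≠ 0) :
    logDeriv (fun s ↦ cauchyDensity x μ s) σ =
      -Real.cos (2 * Real.arctan ((x - μ) / σ)) / σ := by
  have hquad : HasDerivAt (fun s ↦ (x - μ) ^ 2 + s ^ 2) (2 * σ) σ := by
    simpa using ((hasDerivAt_id σ).pow 2).const_add ((x - μ) ^ 2)
  have hquad_ne : (x - μ) ^ 2 + σ ^ 2 ≠ 0 := by positivity
  unfold cauchyDensity
  rw [logDeriv_div σ (by positivity) hquad_ne (by fun_prop) hquad.differentiableAt,
    logDeriv_apply, deriv_div_const, deriv_id'', logDeriv_apply, hquad.deriv, cos_two_mul_arctan]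
  field

end Score

section LikelihoodEquations

theorem sum_logDeriv_eq_zero_of_isLocalExtr_prod {ι : Type*} {s : Finset ι} {f : ι → ℝ → ℝ}
    {a : ℝ} (hf : ∀ i ∈ s, f i a ≠ 0) (hd : ∀ i ∈ s, DifferentiableAt ℝ (f i) a)
    (hext : IsLocalExtr (fun t ↦ ∏ i ∈ s, f i t) a) : ∑ i ∈ s, logDeriv (f i) a = 0 := by
  rw [← logDeriv_prod hf hd, logDeriv_apply, hext.deriv_eq_zero, zero_div]

variable {n : ℕ} {x : Fin n → ℝ} {θ : ℂ}

theorem sum_sin_two_mul_arctan_eq_zero_of_isLocalExtr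
    (hθ : θ.im ≠ 0) (hext : IsLocalExtr (cauchyL x) θ) :
    ∑ j, Real.sin (2 * Real.arctan ((x j - θ.re) / θ.im)) = 0 := by
  have hline : Continuous fun m : ℝ ↦ (⟨m, θ.im⟩ : ℂ) :=
    equivRealProdCLM.symm.continuous.comp (.prodMk_left θ.im)
  have hext_location : IsLocalExtr (fun m ↦ ∏ j, cauchyDensity (x j) m θ.im) θ.re :=
    IsExtrFilter.comp_tendsto (f := cauchyL x) (g := fun m ↦ ⟨m, θ.im⟩)
      hext hline.continuousAt
  have hscore : ∑ j, logDeriv (fun m ↦ cauchyDensity (x j) m θ.im) θ.re = 0 :=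
    sum_logDeriv_eq_zero_of_isLocalExtr_prod
      (fun j _ ↦ cauchyDensity_ne_zero (x j) θ.re hθ)
      (fun j _ ↦ differentiableAt_cauchyDensity_location (x j) θ.re hθ) hext_location
  simpa only [logDeriv_cauchyDensity_location _ _ hθ, ← sum_div, div_eq_zero_iff, hθ, or_false]
    using hscore

theorem sum_cos_two_mul_arctan_eq_zero_of_isLocalExtr
    (hθ : θ.im ≠ 0) (hext : IsLocalExtr (cauchyL x) θ) :
    ∑ j, Real.cos (2 * Real.arctan ((x j - θ.re) / θ.im)) = 0 := by
  have hline : Continuous fun s : ℝ ↦ (⟨θ.re, s⟩ : ℂ) :=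
    equivRealProdCLM.symm.continuous.comp (.prodMk_right θ.re)
  have hext_scale : IsLocalExtr (fun s ↦ ∏ j, cauchyDensity (x j) θ.re s) θ.im :=
    IsExtrFilter.comp_tendsto (f := cauchyL x) (g := fun s ↦ ⟨θ.re, s⟩)
      hext hline.continuousAt
  have hscore : ∑ j, logDeriv (fun s ↦ cauchyDensity (x j) θ.re s) θ.im = 0 :=
    sum_logDeriv_eq_zero_of_isLocalExtr_prod
      (fun j _ ↦ cauchyDensity_ne_zero (x j) θ.re hθ)
      (fun j _ ↦ differentiableAt_cauchyDensity_scale (x j) θ.re hθ) hext_scale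
  simpa only [logDeriv_cauchyDensity_scale _ _ hθ, ← sum_div, sum_neg_distrib, div_eq_zero_iff,
    neg_eq_zero, hθ, or_false] using hscore

end LikelihoodEquations

theorem cauchyCDF_sub_cauchyCDF (x y : ℝ) (θ : ℂ) :
    cauchyCDF y θ - cauchyCDF x θ =
      (2 * Real.arctan ((y - θ.re) / θ.im) - 2 * Real.arctan ((x - θ.re) / θ.im)) /
        (2 * Real.pi) := by
  unfold cauchyCDF
  field

theorem stmt_16_general {x₁ x₂ x₃ : ℝ} (h12 : x₁ ≤ x₂) (h23 : x₂ ≤ x₃)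
    {θ : ℂ} (hθ : 0 < θ.im) (hext : IsLocalExtr (cauchyL ![x₁, x₂, x₃]) θ) :
    cauchyCDF x₂ θ - cauchyCDF x₁ θ = 1 / 3 ∧ cauchyCDF x₃ θ - cauchyCDF x₂ θ = 1 / 3 := by
  have hcos := sum_cos_two_mul_arctan_eq_zero_of_isLocalExtr hθ.ne' hext
  have hsin := sum_sin_two_mul_arctan_eq_zero_of_isLocalExtr hθ.ne' hext
  simp only [Fin.sum_univ_three, Matrix.cons_val] at hcos hsin
  have angle_mono {x y : ℝ} (hxy : x ≤ y) :
      2 * Real.arctan ((x - θ.re) / θ.im) ≤ 2 * Real.arctan ((y - θ.re) / θ.im) := by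
    gcongr
  have angle_range : 2 * Real.arctan ((x₃ - θ.re) / θ.im) <
      2 * Real.arctan ((x₁ - θ.re) / θ.im) + 2 * Real.pi := by
    linarith [Real.arctan_lt_pi_div_two ((x₃ - θ.re) / θ.im),
      Real.neg_pi_div_two_lt_arctan ((x₁ - θ.re) / θ.im)]
  obtain ⟨gap12, gap23⟩ := sub_eq_two_pi_div_three_of_sum_eq_zero
    (angle_mono h12) (angle_mono h23) angle_range hcos hsin
  rw [cauchyCDF_sub_cauchyCDF, cauchyCDF_sub_cauchyCDF, gap12, gap23]
  constructor <;> field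

theorem stmt_16 (x₁ x₂ x₃ : ℝ) (h12 : x₁ < x₂) (h23 : x₂ < x₃)
    (θhat : ℂ) (hθhat : 0 < θhat.im)
    (hmax : ∀ θ : ℂ, 0 < θ.im → cauchyL ![x₁, x₂, x₃] θ ≤ cauchyL ![x₁, x₂, x₃] θhat) :
    cauchyCDF x₃ θhat + cauchyCDF x₁ θhat = 2 * cauchyCDF x₂ θhat := by
  have hlocal : IsLocalMax (cauchyL ![x₁, x₂, x₃]) θhat :=
    Filter.eventually_of_mem (UpperHalfPlane.isOpen_upperHalfPlaneSet.mem_nhds hθhat) hmax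
  obtain ⟨gap12, gap23⟩ := stmt_16_general h12.le h23.le hθhat (.inr hlocal)
  linarith
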